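/- For every phase t ∈ {1, …, d − 1}, every index j ∈ {2, …, d + 1 − t} (i.e., any item of phase t other than (t,1)), and every index j' ∈ {1, …, d − t}, there exists a dimension i ∈ {1, …, d} such that w_{t,j}(i) + w_{t+1,j'}(i) > 1. In particular, if an algorithm keeps an item of phase t other than (t, 1), then unless it disposes of this item it cannot accept any item of phase t + 1. -/

import Mathlib

open scoped BigOperators

/-- The weight of item `(t, j)` (1-based phase `t`, 1-based index `j`) on dimension
`i : Fin d` of the hard instance, where `δ = 2^{-2d}` and `σ` is a permutation of the
`d` dimensions. Writing `s ∈ {1, …, d}` for the 1-based position with `σ(s) = i`: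
the weight is `0` if `s ≤ t − 1`, is `1 − (2^t − 1)·δ` if `s = t + j − 1`, and is
`2^t·δ` otherwise. -/
noncomputable def whard (d : ℕ) (σ : Equiv.Perm (Fin d)) (t j : ℕ) (i : Fin d) : ℝ :=
  let s : ℕ := ((σ.symm i : Fin d) : ℕ) + 1
  let δ : ℝ := (1 / 2) ^ (2 * d)
  if s ≤ t - 1 then 0
  else if s = t + j - 1 then 1 - ((2 : ℝ) ^ t - 1) * δ
  else (2 : ℝ) ^ t * δ

/-- Every item `(t, j)` of phase `t` other than `(t, 1)` conflicts with every item
`(t+1, j')` of phase `t + 1`: on some dimension their weights sum to more than `1`.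
Hence an algorithm keeping such an item cannot accept any item of phase `t + 1`
without disposing of it. -/
theorem statement12 (d : ℕ) (hd : 1 ≤ d) (σ : Equiv.Perm (Fin d))
    (t : ℕ) (ht1 : 1 ≤ t) (ht2 : t ≤ d - 1)
    (j : ℕ) (hj1 : 2 ≤ j) (hj2 : j ≤ d + 1 - t)
    (j' : ℕ) (hj'1 : 1 ≤ j') (hj'2 : j' ≤ d - t) :
    ∃ i : Fin d, 1 < whard d σ t j i + whard d σ (t + 1) j' i := by
  have hδ : (0 : ℝ) < (1 / 2) ^ (2 * d) := by positivity
  have hb : (2 : ℝ) ^ t * 4 * (1 / 2) ^ (2 * d) ≤ 1 := by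
    have h1 : (2 : ℝ) ^ (t + 2) ≤ 2 ^ (2 * d) :=
      pow_le_pow_right₀ (by norm_num) (by omega)
    have h2 : (2 : ℝ) ^ (2 * d) * (1 / 2) ^ (2 * d) = 1 := by
      rw [← mul_pow]; norm_num
    have h3 : (2 : ℝ) ^ (t + 2) = 2 ^ t * 4 := by rw [pow_add]; norm_num
    rw [← h3]
    exact (mul_le_mul_of_nonneg_right h1 hδ.le).trans h2.le
  have ha : (0 : ℝ) < 2 ^ t * (1 / 2) ^ (2 * d) := by positivity
  refine ⟨σ ⟨t + j - 2, by omega⟩, ?_⟩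
  simp only [whard, Equiv.symm_apply_apply]
  rw [if_neg (by omega), if_pos (by omega), if_neg (by omega), pow_succ]
  split_ifs
  · nlinarith
  · nlinarith
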